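/- Let G be a finite simple graph on a vertex set V with |V| = N ≥ 2, and suppose G is a tree (connected and acyclic) in which every vertex has degree at most 3. Call a nonempty subset S ⊆ V a 'triplet' if |S| ≤ 3 and there exists a center c ∈ S such that every element of S other than c is adjacent to c in G. Then there exists a finite family F of triplets covering V and with connected intersection graph (distinct members S, S' adjacent iff S ∩ S' ≠ ∅), together with an assignment to each member S ∈ F of a 2-element subset m(S) ⊆ S, such that the sets m(S) for S ∈ F are pairwise disjoint; in particular 2·|F| ≤ N. -/

import Mathlib

/-- A `triplet` in a graph `G` is a nonempty set of at most 3 vertices having a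
center `c` adjacent to every other element of the set. -/
def IsTriplet {V : Type*} [DecidableEq V] (G : SimpleGraph V) (S : Finset V) : Prop :=
  S.Nonempty ∧ S.card ≤ 3 ∧ ∃ c ∈ S, ∀ x ∈ S, x ≠ c → G.Adj c x

/-- In a connected graph, every vertex other than `r` has a neighbour one step closer to `r`. -/
lemma SimpleGraph.Connected.exists_adj_dist_add_one_eq {V : Type*} {G : SimpleGraph V}
    (hG : G.Connected) {r v : V} (hv : v ≠ r) :
    ∃ w, G.Adj v w ∧ G.dist w r + 1 = G.dist v r := by
  obtain ⟨p, hp⟩ := hG.exists_walk_length_eq_dist v r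
  cases p with
  | nil => exact absurd rfl hv
  | @cons _ w _ h q =>
    refine ⟨w, h, ?_⟩
    have h1 := SimpleGraph.dist_le q
    have h2 := hG.dist_triangle (u := v) (v := w) (w := r)
    rw [SimpleGraph.dist_eq_one_iff_adj.mpr h] at h2
    rw [SimpleGraph.Walk.length_cons] at hp
    omega

/-- `A` and `B` are intersecting members of the family `F`. -/
def MeetIn {V : Type*} [DecidableEq V] (F : Finset (Finset V)) (A B : Finset V) : Prop :=
  A ∈ F ∧ B ∈ F ∧ (A ∩ B).Nonempty

/-- `F` is a family of triplets with union `s` and connected intersection graph, and `m` selects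
pairwise disjoint pairs from its members. -/
structure IsTripletCover {V : Type*} [DecidableEq V] (G : SimpleGraph V) (s : Finset V)
    (F : Finset (Finset V)) (m : Finset V → Finset V) : Prop where
  triplet : ∀ S ∈ F, IsTriplet G S
  subset : ∀ S ∈ F, S ⊆ s
  cover : ∀ v ∈ s, ∃ S ∈ F, v ∈ S
  base : ∃ S₀ ∈ F, ∀ S ∈ F, Relation.ReflTransGen (MeetIn F) S S₀
  pair : ∀ S ∈ F, m S ⊆ S ∧ (m S).card = 2
  disjoint : ∀ S ∈ F, ∀ S' ∈ F, S ≠ S' → Disjoint (m S) (m S')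

namespace IsTripletCover

variable {V : Type*} [DecidableEq V] {G : SimpleGraph V}

lemma singleton {T P : Finset V} (hT : IsTriplet G T) (hP : P ⊆ T) (hcard : P.card = 2) :
    IsTripletCover G T {T} (fun _ => P) where
  triplet S hS := by rwa [Finset.mem_singleton.mp hS]
  subset S hS := by rw [Finset.mem_singleton.mp hS]
  cover v hv := ⟨T, Finset.mem_singleton_self T, hv⟩
  base := ⟨T, Finset.mem_singleton_self T, fun S hS => by rw [Finset.mem_singleton.mp hS]⟩
  pair S hS := by rw [Finset.mem_singleton.mp hS]; exact ⟨hP, hcard⟩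
  disjoint S hS S' hS' hne :=
    absurd ((Finset.mem_singleton.mp hS).trans (Finset.mem_singleton.mp hS').symm) hne

/-- A cover extends by a triplet made of an old vertex `c` and two new vertices `a`, `b`. -/
lemma insert_triplet {s : Finset V} {F : Finset (Finset V)} {m : Finset V → Finset V}
    (h : IsTripletCover G s F m) {a b c : V} (ha : a ∉ s) (hb : b ∉ s) (hc : c ∈ s)
    (hab : a ≠ b) (hT : IsTriplet G {c, a, b}) :
    IsTripletCover G (insert a (insert b s)) (insert {c, a, b} F)
      (Function.update m {c, a, b} {a, b}) := by
  set T : Finset V := {c, a, b} with hTdef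
  have haT : a ∈ T := by simp [hTdef]
  have hcT : c ∈ T := by simp [hTdef]
  have hTF : T ∉ F := fun hmem => ha (h.subset T hmem haT)
  have hne : ∀ S ∈ F, S ≠ T := fun S hS hST => hTF (hST ▸ hS)
  have hdis : ∀ S ∈ F, Disjoint ({a, b} : Finset V) (m S) := by
    intro S hS
    have hsub := (h.pair S hS).1.trans (h.subset S hS)
    rw [Finset.disjoint_left]
    intro x hx hxm
    rcases Finset.mem_insert.mp hx with rfl | hx
    · exact ha (hsub hxm)
    · exact hb (Finset.mem_singleton.mp hx ▸ hsub hxm)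
  refine ⟨?_, ?_, ?_, ?_, ?_, ?_⟩
  · exact Finset.forall_mem_insert .. |>.mpr ⟨hT, h.triplet⟩
  · refine Finset.forall_mem_insert .. |>.mpr ⟨?_, fun S hS x hx => ?_⟩
    · intro x hx
      simp only [hTdef, Finset.mem_insert, Finset.mem_singleton] at hx ⊢
      rcases hx with rfl | rfl | rfl <;> simp [hc]
    · exact Finset.mem_insert_of_mem (Finset.mem_insert_of_mem (h.subset S hS hx))
  · intro v hv
    rw [Finset.mem_insert, Finset.mem_insert] at hv
    rcases hv with rfl | rfl | hv
    · exact ⟨T, Finset.mem_insert_self _ _, haT⟩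
    · exact ⟨T, Finset.mem_insert_self _ _, by simp [hTdef]⟩
    · obtain ⟨S, hS, hvS⟩ := h.cover v hv
      exact ⟨S, Finset.mem_insert_of_mem hS, hvS⟩
  · obtain ⟨S₀, hS₀, hreach⟩ := h.base
    obtain ⟨S₁, hS₁, hcS₁⟩ := h.cover c hc
    have hlift : ∀ S ∈ F, Relation.ReflTransGen (MeetIn (insert T F)) S S₀ := fun S hS =>
      Relation.ReflTransGen.mono (fun A B hAB =>
        ⟨Finset.mem_insert_of_mem hAB.1, Finset.mem_insert_of_mem hAB.2.1, hAB.2.2⟩)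
        _ _ (hreach S hS)
    refine ⟨S₀, Finset.mem_insert_of_mem hS₀, Finset.forall_mem_insert .. |>.mpr ⟨?_, hlift⟩⟩
    exact .head ⟨Finset.mem_insert_self _ _, Finset.mem_insert_of_mem hS₁,
      c, Finset.mem_inter.mpr ⟨hcT, hcS₁⟩⟩ (hlift S₁ hS₁)
  · refine Finset.forall_mem_insert .. |>.mpr ⟨?_, fun S hS => ?_⟩
    · rw [Function.update_self]
      exact ⟨Finset.subset_insert _ _, Finset.card_pair hab⟩
    · rw [Function.update_of_ne (hne S hS)]
      exact h.pair S hS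
  · intro S hS S' hS' hSS'
    rcases Finset.mem_insert.mp hS with rfl | hSF <;>
      rcases Finset.mem_insert.mp hS' with rfl | hSF'
    · exact absurd rfl hSS'
    · rw [Function.update_self, Function.update_of_ne (hne S' hSF')]
      exact hdis S' hSF'
    · rw [Function.update_self, Function.update_of_ne (hne S hSF)]
      exact (hdis S hSF).symm
    · rw [Function.update_of_ne (hne S hSF), Function.update_of_ne (hne S' hSF')]
      exact h.disjoint S hSF S' hSF' hSS'

lemma connected {s : Finset V} {F : Finset (Finset V)} {m : Finset V → Finset V}
    (h : IsTripletCover G s F m) :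
    (SimpleGraph.fromRel
      (fun S S' : {S // S ∈ F} => ((S : Finset V) ∩ (S' : Finset V)).Nonempty)).Connected := by
  obtain ⟨S₀, hS₀, hreach⟩ := h.base
  rw [SimpleGraph.connected_iff_exists_forall_reachable]
  refine ⟨⟨S₀, hS₀⟩, fun ⟨S, hS⟩ => SimpleGraph.Reachable.symm ?_⟩
  have hS' := hreach S hS
  induction hS' using Relation.ReflTransGen.head_induction_on with
  | refl => exact .refl _
  | @head A B hAB _ ih =>
    refine SimpleGraph.Reachable.trans ?_ (ih hAB.2.1)
    rcases eq_or_ne A B with rfl | hne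
    · exact .refl _
    · refine SimpleGraph.Adj.reachable ?_
      rw [SimpleGraph.fromRel_adj]
      exact ⟨fun heq => hne (congrArg Subtype.val heq), .inl hAB.2.2⟩

lemma two_mul_card_le {s : Finset V} {F : Finset (Finset V)} {m : Finset V → Finset V}
    (h : IsTripletCover G s F m) : 2 * F.card ≤ s.card := by
  have hcard : (F.biUnion m).card = F.card * 2 := by
    rw [Finset.card_biUnion h.disjoint]
    exact Finset.sum_const_nat fun S hS => (h.pair S hS).2
  have hle : (F.biUnion m).card ≤ s.card := Finset.card_le_card <|
    Finset.biUnion_subset.mpr fun S hS => (h.pair S hS).1.trans (h.subset S hS)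
  omega

end IsTripletCover

lemma isTriplet_of_adj {V : Type*} [DecidableEq V] {G : SimpleGraph V} {S : Finset V} {c : V}
    (hcard : S.card ≤ 3) (hc : c ∈ S) (hadj : ∀ x ∈ S, x ≠ c → G.Adj c x) : IsTriplet G S :=
  ⟨⟨c, hc⟩, hcard, c, hc, hadj⟩

/-- A vertex set closed under taking parents in a rooted tree has, as soon as it has more than two
elements, two vertices forming a triplet with a third one whose removal keeps it
closed. -/
lemma exists_removable_pair {V : Type*} [DecidableEq V] {G : SimpleGraph V} {r : V}
    {par : V → V} {depth : V → ℕ} (hdepth0 : ∀ v, depth v = 0 ↔ v = r)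
    (hadj : ∀ v, v ≠ r → G.Adj v (par v)) (hdepth : ∀ v, v ≠ r → depth (par v) + 1 = depth v)
    {s : Finset V} (hr : r ∈ s) (hs : ∀ v ∈ s, v ≠ r → par v ∈ s) (hcard : 2 < s.card) :
    ∃ a ∈ s, ∃ b ∈ s, ∃ c ∈ s, a ≠ b ∧ c ≠ a ∧ c ≠ b ∧ a ≠ r ∧ b ≠ r ∧ IsTriplet G {c, a, b} ∧
      ∀ v ∈ s, v ≠ r → v ≠ a → v ≠ b → par v ≠ a ∧ par v ≠ b := by
  obtain ⟨u₀, hu₀, hu₀r⟩ := Finset.exists_mem_ne (by omega : 1 < s.card) r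
  obtain ⟨u, hu, hmax⟩ := Finset.exists_max_image s depth ⟨r, hr⟩
  have hur : u ≠ r := by
    rintro rfl
    have hmax₀ := hmax u₀ hu₀
    rw [(hdepth0 u).mpr rfl] at hmax₀
    exact hu₀r ((hdepth0 u₀).mp (Nat.le_zero.mp hmax₀))
  have hleaf : ∀ v ∈ s, v ≠ r → ∀ w, depth w = depth u → par v ≠ w := by
    rintro v hv hvr w hw rfl
    have := hdepth v hvr
    have := hmax v hv
    omega
  have hpu : par u ≠ u := hleaf u hu hur u rfl
  by_cases hsib : ∃ w ∈ s, w ≠ u ∧ w ≠ r ∧ par w = par u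
  · obtain ⟨w, hw, hwu, hwr, hwp⟩ := hsib
    have hdw : depth w = depth u := by rw [← hdepth w hwr, ← hdepth u hur, hwp]
    refine ⟨u, hu, w, hw, par u, hs u hu hur, hwu.symm, hpu, hleaf u hu hur w hdw, hur, hwr, ?_,
      fun v hv hvr _ _ => ⟨hleaf v hv hvr u rfl, hleaf v hv hvr w hdw⟩⟩
    refine isTriplet_of_adj Finset.card_le_three (Finset.mem_insert_self _ _) ?_
    intro x hx hxp
    simp only [Finset.mem_insert, Finset.mem_singleton] at hx
    rcases hx with rfl | rfl | rfl
    · exact absurd rfl hxp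
    · exact (hadj x hur).symm
    · exact hwp ▸ (hadj x hwr).symm
  · push Not at hsib
    have hpr : par u ≠ r := by
      intro hpr
      have hdu := hdepth u hur
      refine hcard.not_ge ((Finset.card_le_card (t := {r, u}) fun v hv => ?_).trans
        Finset.card_le_two)
      by_contra hvn
      simp only [Finset.mem_insert, Finset.mem_singleton, not_or] at hvn
      refine hsib v hv hvn.2 hvn.1 (hpr.symm ▸ (hdepth0 _).mp ?_)
      have hdv := hdepth v hvn.1
      have hle := hmax v hv
      rw [(hdepth0 _).mpr hpr] at hdu
      omega
    have hp := hs u hu hur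
    have hdu := hdepth u hur
    have hdp := hdepth (par u) hpr
    refine ⟨u, hu, par u, hp, par (par u), hs _ hp hpr, hpu.symm, ?_, ?_, hur, hpr, ?_,
      fun v hv hvr hvu _ => ⟨hleaf v hv hvr u rfl, hsib v hv hvu hvr⟩⟩
    · intro heq
      rw [heq] at hdp
      omega
    · intro heq
      rw [heq] at hdp
      omega
    · refine isTriplet_of_adj (c := par u) Finset.card_le_three (by simp) ?_
      intro x hx hxp
      simp only [Finset.mem_insert, Finset.mem_singleton] at hx
      rcases hx with rfl | rfl | rfl
      · exact hadj _ hpr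
      · exact (hadj x hur).symm
      · exact absurd rfl hxp

/-- Every parent-closed vertex set with at least two elements has a triplet cover with pairwise
disjoint pairs. -/
lemma exists_isTripletCover {V : Type*} [DecidableEq V] {G : SimpleGraph V} {r : V}
    {par : V → V} {depth : V → ℕ} (hdepth0 : ∀ v, depth v = 0 ↔ v = r)
    (hadj : ∀ v, v ≠ r → G.Adj v (par v)) (hdepth : ∀ v, v ≠ r → depth (par v) + 1 = depth v)
    (s : Finset V) (hr : r ∈ s) (hs : ∀ v ∈ s, v ≠ r → par v ∈ s) (hcard : 2 ≤ s.card) :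
    ∃ F m, IsTripletCover G s F m := by
  induction s using Finset.strongInduction with
  | H s ih =>
    rcases hcard.eq_or_lt with htwo | hcard
    · obtain ⟨u, hu, hur⟩ := Finset.exists_mem_ne (by omega : 1 < s.card) r
      have hpu : par u = r := by
        by_contra hne
        have hpuu : par u ≠ u := (hadj u hur).ne'
        have hsub : ({r, u, par u} : Finset V) ⊆ s := by
          simp [Finset.insert_subset_iff, hr, hu, hs u hu hur]
        have := Finset.card_le_card hsub
        rw [Finset.card_eq_three.mpr ⟨r, u, par u, hur.symm, Ne.symm hne, hpuu.symm, rfl⟩] at this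
        omega
      have hsru : {r, u} = s := Finset.eq_of_subset_of_card_le
        (by simp [Finset.insert_subset_iff, hr, hu]) (by rw [Finset.card_pair hur.symm, htwo])
      refine ⟨{s}, fun _ => s, .singleton (isTriplet_of_adj (by omega) hr ?_) subset_rfl htwo.symm⟩
      intro x hx hxr
      rw [← hsru, Finset.mem_insert, Finset.mem_singleton] at hx
      obtain rfl := hx.resolve_left hxr
      exact hpu ▸ (hadj x hxr).symm
    · obtain ⟨a, ha, b, hb, c, hc, hab, hca, hcb, har, hbr, hT, hclosed⟩ :=
        exists_removable_pair hdepth0 hadj hdepth hr hs hcard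
      set s' := (s.erase a).erase b with hs'
      have hb' : b ∈ s.erase a := Finset.mem_erase.mpr ⟨hab.symm, hb⟩
      have hins : insert a (insert b s') = s := by
        rw [hs', Finset.insert_erase hb', Finset.insert_erase ha]
      have hmem : ∀ v, v ∈ s' ↔ v ≠ b ∧ v ≠ a ∧ v ∈ s := by simp [hs']
      have hc' : c ∈ s' := (hmem c).mpr ⟨hcb, hca, hc⟩
      rcases Nat.lt_or_ge s'.card 2 with hlt | hge
      · have hs'c : s' = {c} := by
          refine (Finset.eq_of_subset_of_card_le (Finset.singleton_subset_iff.mpr hc') ?_).symm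
          rw [Finset.card_singleton]
          omega
        have hsT : s = {c, a, b} := by
          rw [← hins, hs'c]
          ext x
          simp only [Finset.mem_insert, Finset.mem_singleton]
          tauto
        rw [hsT]
        exact ⟨_, _, .singleton hT (Finset.subset_insert _ _) (Finset.card_pair hab)⟩
      · have hss : s' ⊂ s := by
          refine (Finset.ssubset_iff_of_subset fun v hv => ((hmem v).mp hv).2.2).mpr ⟨a, ha, ?_⟩
          exact fun h => ((hmem a).mp h).2.1 rfl
        obtain ⟨F, m, hF⟩ := ih s' hss ((hmem r).mpr ⟨hbr.symm, har.symm, hr⟩)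
          (fun v hv hvr => by
            obtain ⟨hvb, hva, hvs⟩ := (hmem v).mp hv
            obtain ⟨hpa, hpb⟩ := hclosed v hvs hvr hva hvb
            exact (hmem _).mpr ⟨hpb, hpa, hs v hvs hvr⟩) hge
        rw [← hins]
        exact ⟨_, _, hF.insert_triplet (fun h => ((hmem a).mp h).2.1 rfl)
          (fun h => ((hmem b).mp h).1 rfl) hc' hab hT⟩

/-- Structural restatement of Proposition 1: for a tree `G` on `N ≥ 2` vertices with
maximum degree at most 3, there is a family `F` of triplets covering `V` with
connected intersection graph, together with an assignment of a 2-element subset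
`m S ⊆ S` to each `S ∈ F` such that the sets `m S` are pairwise disjoint; in
particular `2·|F| ≤ N`. -/
theorem triplet_cover_disjoint_pairs_of_tree
    {V : Type*} [Fintype V] [DecidableEq V] (N : ℕ)
    (hV : Fintype.card V = N) (hN : 2 ≤ N)
    (G : SimpleGraph V) [DecidableRel G.Adj]
    (htree : G.IsTree) (hdeg : ∀ v : V, G.degree v ≤ 3) :
    ∃ F : Finset (Finset V), ∃ m : Finset V → Finset V,
      (∀ S ∈ F, IsTriplet G S) ∧
      (∀ v : V, ∃ S ∈ F, v ∈ S) ∧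
      (SimpleGraph.fromRel
        (fun S S' : {S // S ∈ F} => ((S : Finset V) ∩ (S' : Finset V)).Nonempty)).Connected ∧
      (∀ S ∈ F, m S ⊆ S ∧ (m S).card = 2) ∧
      (∀ S ∈ F, ∀ S' ∈ F, S ≠ S' → Disjoint (m S) (m S')) ∧
      2 * F.card ≤ N := by
  subst hV
  obtain ⟨r⟩ := htree.connected.nonempty
  choose! par hpar using fun v (hv : v ≠ r) => htree.connected.exists_adj_dist_add_one_eq hv
  obtain ⟨F, m, h⟩ := exists_isTripletCover (G := G) (par := par) (depth := fun v => G.dist v r)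
    (fun v => htree.connected.dist_eq_zero_iff) (fun v hv => (hpar v hv).1)
    (fun v hv => (hpar v hv).2) Finset.univ (Finset.mem_univ r)
    (fun v _ _ => Finset.mem_univ _) hN
  exact ⟨F, m, h.triplet, fun v => h.cover v (Finset.mem_univ v), h.connected, h.pair, h.disjoint,
    h.two_mul_card_le⟩
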